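/- Let Y be a finite subset of ℂ and let x₀ ∈ ℂ with x₀ ∉ Y. Then the fundamental group π₁(ℂ \ Y, x₀) of the complement of Y in ℂ (with its standard topology), based at x₀, is isomorphic as a group to the free group F(Y) on the set Y. In particular, π₁(ℂ \ Y, x₀) is a free group of rank |Y|. -/

import Mathlib

/-!
After multiplication by a suitable complex number the points of `Y` have distinct abscissas. The
complement of `Y` is then the union of two slit planes, the plane without the vertical rays going
up from the points and the plane without the rays going down. Both are simply connected, and they
meet in `|Y| + 1` disjoint open vertical strips: one to the left of all the points, and one
immediately to the right of each point. Take the base point in the leftmost strip. For each point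
of `Y`, go out to the strip on its right in the first slit plane and come back in the second one:
these loops define a homomorphism from the free group on `Y` to the fundamental group.

It is surjective because a path can be subdivided into pieces lying in one slit plane each: a
piece contributes nothing, and each change of slit plane contributes the loop through the strip in
which it happens. It is injective because the two products of a slit plane with the discrete space
`FreeGroup Y` can be glued, by left multiplication by the corresponding generator over each strip,
to a covering whose monodromy along the image of a word is left multiplication by that word.
-/

open Topology unitInterval

section PathClasses

variable {X : Type*} [TopologicalSpace X]

theorem pathClass_induction_of_isOpen_cover {κ : Type*} {U : κ → Set X} (hU : ∀ i, IsOpen (U i))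
    (hcover : ⋃ i, U i = Set.univ) {P : ∀ ⦃x y : X⦄, Path.Homotopic.Quotient x y → Prop}
    (mem : ∀ (i : κ) ⦃x y : X⦄ (γ : Path x y), (∀ t, γ t ∈ U i) → P (.mk γ))
    (trans : ∀ ⦃x y z : X⦄ (γ : Path.Homotopic.Quotient x y) (γ' : Path.Homotopic.Quotient y z),
      P γ → P γ' → P (γ.trans γ'))
    {x y : X} (γ : Path.Homotopic.Quotient x y) : P γ := by
  induction γ using Path.Homotopic.Quotient.ind with | mk γ
  obtain ⟨t, t_zero, t_mono, ⟨n, t_eq_one⟩, ht⟩ :=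
    exists_monotone_Icc_subset_open_cover_unitInterval (fun i ↦ (hU i).preimage γ.continuous)
      (by rw [← Set.preimage_iUnion, hcover, Set.preimage_univ])
  have piece (m : ℕ) : P (.mk (γ.subpath (t m) (t (m + 1)))) := by
    obtain ⟨i, hi⟩ := ht m
    refine mem i _ (Set.range_subset_iff.1 ?_)
    rw [Path.range_subpath_of_le _ _ _ (t_mono m.le_succ)]
    exact Set.image_subset_iff.2 hi
  have initial (m : ℕ) : P (.mk (γ.subpath (t 0) (t (m + 1)))) := by
    induction m with
    | zero => exact piece 0
    | succ m ih =>
      rw [← Path.Homotopic.Quotient.eq.2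
        ⟨Path.Homotopy.subpathTransSubpath γ (t 0) (t (m + 1)) (t (m + 2))⟩]
      exact trans _ _ ih (piece (m + 1))
  have whole := initial n
  rw [t_zero, t_eq_one _ n.le_succ, Path.subpath_zero_one] at whole
  obtain ⟨γ, rfl, rfl⟩ := γ
  exact whole

theorem homotopic_of_isSimplyConnected {S : Set X} (hS : IsSimplyConnected S) {x y : X}
    {γ γ' : Path x y} (hγ : ∀ t, γ t ∈ S) (hγ' : ∀ t, γ' t ∈ S) : γ.Homotopic γ' := by
  have := hS.simplyConnectedSpace
  have hx : x ∈ S := γ.source ▸ hγ 0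
  have hy : y ∈ S := γ.target ▸ hγ 1
  let lift (δ : Path x y) (hδ : ∀ t, δ t ∈ S) : Path (⟨x, hx⟩ : S) ⟨y, hy⟩ :=
    { toFun t := ⟨δ t, hδ t⟩
      source' := Subtype.ext δ.source
      target' := Subtype.ext δ.target }
  exact (SimplyConnectedSpace.paths_homotopic (lift γ hγ) (lift γ' hγ')).map
    ⟨Subtype.val, continuous_subtype_val⟩

theorem isSimplyConnected_preimage_coe {S T : Set X} (hS : IsSimplyConnected S) (h : S ⊆ T) :
    IsSimplyConnected ((↑) ⁻¹' S : Set T) := by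
  rw [← IsEmbedding.subtypeVal.isSimplyConnected_image]
  rwa [Subtype.image_preimage_val, Set.inter_eq_right.2 h]

/-- Homotopy equivalent spaces have isomorphic fundamental groups. -/
noncomputable def fundamentalGroupMulEquivOfHomotopyEquiv {Y : Type*} [TopologicalSpace Y]
    (e : ContinuousMap.HomotopyEquiv X Y) (x : X) :
    FundamentalGroup X x ≃* FundamentalGroup Y (e x) :=
  (FundamentalGroupoidFunctor.equivOfHomotopyEquiv e).fullyFaithfulFunctor.mulEquivEnd ⟨x⟩

end PathClasses

section DiscreteBundle

variable {κ X S : Type*} [TopologicalSpace X] [TopologicalSpace S] (Z : FiberBundleCore κ X S)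

/-- The point above `x` whose coordinate in the chart `i` is `s`; junk for `x` outside the base
set of that chart. -/
def sheetPoint (i : κ) (x : X) (s : S) : Z.proj ⁻¹' {x} :=
  ⟨⟨x, Z.coordChange i (Z.indexAt x) x s⟩, rfl⟩

theorem sheetPoint_coordChange {i j : κ} {x : X} (hi : x ∈ Z.baseSet i) (hj : x ∈ Z.baseSet j)
    (s : S) : sheetPoint Z j x (Z.coordChange i j x s) = sheetPoint Z i x s :=
  Subtype.ext <| congrArg (Bundle.TotalSpace.mk x) <|
    Z.coordChange_comp i j (Z.indexAt x) x ⟨⟨hi, hj⟩, Z.mem_baseSet_at x⟩ s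

theorem sheetPoint_injective {i : κ} {x : X} (hx : x ∈ Z.baseSet i) :
    Function.Injective (sheetPoint Z i x) := by
  have coord_eq (s : S) : Z.coordChange (Z.indexAt x) i x (sheetPoint Z i x s).1.2 = s :=
    (Z.coordChange_comp i _ i x ⟨⟨hx, Z.mem_baseSet_at x⟩, hx⟩ s).trans
      (Z.coordChange_self i x hx s)
  intro s s' h
  rw [← coord_eq s, h, coord_eq s']

theorem continuousOn_sheetPoint (i : κ) (s : S) :
    ContinuousOn (fun x ↦ (sheetPoint Z i x s : Z.TotalSpace)) (Z.baseSet i) :=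
  (Z.localTriv i).toOpenPartialHomeomorph.continuousOn_symm.comp
    (f := fun x ↦ (x, s)) (by fun_prop) fun x hx ↦ (Z.mem_localTriv_target i (x, s)).2 hx

variable [DiscreteTopology S]

theorem isCoveringMap_fiberBundleCore_proj : IsCoveringMap Z.proj :=
  IsFiberBundle.isCoveringMap fun x ↦ ⟨Z.localTriv (Z.indexAt x), Z.mem_baseSet_at x⟩

theorem monodromy_sheetPoint {i : κ} {x y : X} {γ : Path x y} (hγ : ∀ t, γ t ∈ Z.baseSet i)
    (s : S) : (isCoveringMap_fiberBundleCore_proj Z).monodromy (.mk γ) (sheetPoint Z i x s) =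
      sheetPoint Z i y s := by
  let lift : Path (sheetPoint Z i x s : Z.TotalSpace) (sheetPoint Z i y s) :=
    { toFun t := sheetPoint Z i (γ t) s
      continuous_toFun := (continuousOn_sheetPoint Z i s).comp_continuous γ.continuous hγ
      source' := congrArg (fun z ↦ (sheetPoint Z i z s : Z.TotalSpace)) γ.source
      target' := congrArg (fun z ↦ (sheetPoint Z i z s : Z.TotalSpace)) γ.target }
  exact IsCoveringMap.monodromy_eq_of_map_eq _ (.mk lift) rfl

end DiscreteBundle

/-- A cover of a space by two simply connected open sets `U true` and `U false` whose intersection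
is the disjoint union of path connected open sets `W k`. One of them, `W none`, is singled out to
carry the base point; the others are indexed by `ι`. -/
structure BinaryCover (X ι : Type*) [TopologicalSpace X] where
  /-- The two members of the cover. -/
  U : Bool → Set X
  /-- The components of their intersection. -/
  W : Option ι → Set X
  isOpen_U : ∀ i, IsOpen (U i)
  isSimplyConnected_U : ∀ i, IsSimplyConnected (U i)
  iUnion_U : ⋃ i, U i = Set.univ
  isOpen_W : ∀ k, IsOpen (W k)
  isPathConnected_W : ∀ k, IsPathConnected (W k)
  iUnion_W : ⋃ k, W k = U true ∩ U false
  disjoint_W : Pairwise fun k l ↦ Disjoint (W k) (W l)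

namespace BinaryCover

variable {X ι : Type*} [TopologicalSpace X] (D : BinaryCover X ι)

theorem exists_mem_U (x : X) : ∃ i, x ∈ D.U i := Set.mem_iUnion.1 (D.iUnion_U ▸ Set.mem_univ x)

theorem exists_mem_W {x : X} (hx : x ∈ D.U true ∩ D.U false) : ∃ k, x ∈ D.W k :=
  Set.mem_iUnion.1 (D.iUnion_W ▸ hx)

theorem W_subset_U (k : Option ι) (i : Bool) : D.W k ⊆ D.U i := by
  have h : D.W k ⊆ D.U true ∩ D.U false := D.iUnion_W ▸ Set.subset_iUnion D.W k
  cases i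
  · exact h.trans Set.inter_subset_right
  · exact h.trans Set.inter_subset_left

/-- A chosen point of each component of the intersection. -/
noncomputable def point (k : Option ι) : X := (D.isPathConnected_W k).nonempty.some

theorem point_mem_W (k : Option ι) : D.point k ∈ D.W k := (D.isPathConnected_W k).nonempty.some_mem

theorem point_mem_U (k : Option ι) (i : Bool) : D.point k ∈ D.U i :=
  D.W_subset_U k i (D.point_mem_W k)

/-- The base point, chosen in the component `W none`. -/
noncomputable def base : X := D.point none

theorem base_mem_U (i : Bool) : D.base ∈ D.U i := D.point_mem_U none i

include D in
theorem pathConnectedSpace : PathConnectedSpace X := by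
  rw [pathConnectedSpace_iff_univ, ← D.iUnion_U,
    show ⋃ i, D.U i = D.U true ∪ D.U false from iSup_bool_eq]
  exact (D.isSimplyConnected_U true).isPathConnected.union
    (D.isSimplyConnected_U false).isPathConnected ⟨D.base, D.base_mem_U true, D.base_mem_U false⟩

/-! ### Loops through the components of the intersection -/

/-- A chosen path in `U i` from the base point to a point of `U i`. -/
noncomputable def arc (i : Bool) {x : X} (hx : x ∈ D.U i) : Path D.base x :=
  ((D.isSimplyConnected_U i).isPathConnected.joinedIn _ (D.base_mem_U i) _ hx).somePath

theorem arc_mem (i : Bool) {x : X} (hx : x ∈ D.U i) (t : I) : D.arc i hx t ∈ D.U i :=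
  JoinedIn.somePath_mem _ t

theorem mk_arc_base (i : Bool) :
    .mk (D.arc i (D.base_mem_U i)) = Path.Homotopic.Quotient.refl D.base :=
  Path.Homotopic.Quotient.eq.2 <|
    homotopic_of_isSimplyConnected (D.isSimplyConnected_U i) (D.arc_mem i _) fun _ ↦ D.base_mem_U i

theorem mk_arc_trans {i : Bool} {x y : X} (hx : x ∈ D.U i) (hy : y ∈ D.U i) {γ : Path x y}
    (hγ : ∀ t, γ t ∈ D.U i) :
    (Path.Homotopic.Quotient.mk (D.arc i hx)).trans (.mk γ) = .mk (D.arc i hy) :=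
  Path.Homotopic.Quotient.eq.2 <| homotopic_of_isSimplyConnected (D.isSimplyConnected_U i)
    (γ := (D.arc i hx).trans γ)
    (fun t ↦ by
      have h : (D.arc i hx).trans γ t ∈ Set.range ((D.arc i hx).trans γ) := ⟨t, rfl⟩
      rw [Path.trans_range] at h
      rcases h with ⟨s, hs⟩ | ⟨s, hs⟩
      · exact hs ▸ D.arc_mem i hx s
      · exact hs ▸ hγ s)
    (D.arc_mem i hy)

/-- The class of a path from `U i` to `U j`, closed up to a loop by arcs in `U i` and `U j`. -/
noncomputable def loop (i j : Bool) {x y : X} (hx : x ∈ D.U i) (hy : y ∈ D.U j)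
    (γ : Path.Homotopic.Quotient x y) : FundamentalGroup X D.base :=
  .fromPath (((Path.Homotopic.Quotient.mk (D.arc i hx)).trans γ).trans
    (Path.Homotopic.Quotient.mk (D.arc j hy)).symm)

theorem loop_trans {i j l : Bool} {x y z : X} (hx : x ∈ D.U i) (hy : y ∈ D.U j) (hz : z ∈ D.U l)
    (γ : Path.Homotopic.Quotient x y) (γ' : Path.Homotopic.Quotient y z) :
    D.loop i l hx hz (γ.trans γ') = D.loop j l hy hz γ' * D.loop i j hx hy γ := by
  rw [FundamentalGroup.mul_def]
  generalize ha : Path.Homotopic.Quotient.mk (D.arc j hy) = a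
  have cancel {w : X} (δ : Path.Homotopic.Quotient y w) : a.symm.trans (a.trans δ) = δ := by
    rw [← Path.Homotopic.Quotient.trans_assoc, Path.Homotopic.Quotient.symm_trans,
      Path.Homotopic.Quotient.refl_trans]
  simp only [loop, ha, Path.Homotopic.Quotient.trans_assoc, cancel]

theorem loop_mk_of_mem {i : Bool} {x y : X} (hx : x ∈ D.U i) (hy : y ∈ D.U i) {γ : Path x y}
    (hγ : ∀ t, γ t ∈ D.U i) : D.loop i i hx hy (.mk γ) = 1 := by
  rw [loop, D.mk_arc_trans hx hy hγ, Path.Homotopic.Quotient.trans_symm]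
  rfl

theorem loop_self_refl {i : Bool} {x : X} (hx : x ∈ D.U i) : D.loop i i hx hx (.refl x) = 1 :=
  D.loop_mk_of_mem hx hx (γ := Path.refl x) fun _ ↦ hx

theorem loop_base (i j : Bool) (γ : FundamentalGroup X D.base) :
    D.loop i j (D.base_mem_U i) (D.base_mem_U j) γ.toPath = γ := by
  rw [loop, mk_arc_base, mk_arc_base, Path.Homotopic.Quotient.refl_trans]
  exact Path.Homotopic.Quotient.trans_refl γ.toPath

/-- The loop that goes out through `U true`, crosses `W k` and comes back through `U false`. -/
noncomputable def generator (k : Option ι) : FundamentalGroup X D.base :=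
  D.loop true false (D.point_mem_U k true) (D.point_mem_U k false) (.refl _)

theorem generator_none : D.generator none = 1 := D.loop_base true false 1

theorem loop_refl_eq_generator {k : Option ι} {x : X} (hx : x ∈ D.W k) (ht : x ∈ D.U true)
    (hf : x ∈ D.U false) : D.loop true false ht hf (.refl x) = D.generator k := by
  obtain ⟨γ, hγ⟩ := (D.isPathConnected_W k).joinedIn x hx _ (D.point_mem_W k)
  have hγU (i : Bool) (t : I) : γ t ∈ D.U i := D.W_subset_U k i (hγ t)
  calc D.loop true false ht hf (.refl x)
      = D.loop false false hf (D.point_mem_U k false) (.mk γ) *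
          D.loop true false ht hf (.refl x) := by
        rw [D.loop_mk_of_mem _ _ (hγU false), one_mul]
    _ = D.generator k * D.loop true true ht (D.point_mem_U k true) (.mk γ) := by
        rw [generator, ← loop_trans, ← loop_trans, Path.Homotopic.Quotient.refl_trans,
          Path.Homotopic.Quotient.trans_refl]
    _ = D.generator k := by rw [D.loop_mk_of_mem _ _ (hγU true), mul_one]

/-- The homomorphism sending a free generator `k` to the loop through `W (some k)`. -/
noncomputable def generatorHom : FreeGroup ι →* FundamentalGroup X D.base :=
  FreeGroup.lift fun k ↦ D.generator (some k)

theorem generator_mem_range (k : Option ι) : D.generator k ∈ D.generatorHom.range := by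
  cases k with
  | none => exact D.generator_none ▸ one_mem _
  | some k => exact ⟨FreeGroup.of k, FreeGroup.lift_apply_of⟩

theorem loop_refl_mem_range {i j : Bool} {x : X} (hi : x ∈ D.U i) (hj : x ∈ D.U j) :
    D.loop i j hi hj (.refl x) ∈ D.generatorHom.range := by
  have true_false (ht : x ∈ D.U true) (hf : x ∈ D.U false) :
      D.loop true false ht hf (.refl x) ∈ D.generatorHom.range := by
    obtain ⟨k, hk⟩ := D.exists_mem_W ⟨ht, hf⟩
    exact D.loop_refl_eq_generator hk ht hf ▸ D.generator_mem_range k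
  rcases i with _ | _ <;> rcases j with _ | _
  · exact D.loop_self_refl hi ▸ one_mem _
  · have inverse : D.loop true false hj hi (.refl x) * D.loop false true hi hj (.refl x) = 1 := by
      rw [← loop_trans, Path.Homotopic.Quotient.refl_trans, loop_self_refl]
    exact eq_inv_of_mul_eq_one_right inverse ▸ inv_mem (true_false hj hi)
  · exact true_false hi hj
  · exact D.loop_self_refl hi ▸ one_mem _

theorem loop_mem_range {i j : Bool} {x y : X} (hx : x ∈ D.U i) (hy : y ∈ D.U j)
    (γ : Path.Homotopic.Quotient x y) : D.loop i j hx hy γ ∈ D.generatorHom.range := by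
  induction γ using pathClass_induction_of_isOpen_cover D.isOpen_U D.iUnion_U generalizing i j with
  | mem l γ hγ =>
    have hx' : _ ∈ D.U l := γ.source ▸ hγ 0
    have hy' : _ ∈ D.U l := γ.target ▸ hγ 1
    rw [← Path.Homotopic.Quotient.refl_trans (.mk γ), D.loop_trans hx hx' hy,
      ← Path.Homotopic.Quotient.trans_refl (.mk γ), D.loop_trans hx' hy' hy,
      D.loop_mk_of_mem hx' hy' hγ, mul_one]
    exact mul_mem (D.loop_refl_mem_range hy' hy) (D.loop_refl_mem_range hx hx')
  | trans γ γ' ih ih' =>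
    obtain ⟨l, hl⟩ := D.exists_mem_U _
    exact D.loop_trans hx hl hy γ γ' ▸ mul_mem (ih' hl hy) (ih hx hl)

theorem generatorHom_surjective : Function.Surjective D.generatorHom := fun γ ↦
  D.loop_base true true γ ▸ D.loop_mem_range (D.base_mem_U true) (D.base_mem_U true) γ.toPath

/-! ### The covering glued by a family of permutations -/

section Gluing

variable {S : Type*} (c : ι → Equiv.Perm S)

open Classical in
/-- The permutation of the sheets when passing from the chart `U true` to the chart `U i` at a
point `x`: it is `c k` for `i = false` and `x ∈ W (some k)`, and the identity over `W none`. Off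
the intersection of the charts its value is irrelevant. -/
noncomputable def gauge : Bool → X → Equiv.Perm S
  | true, _ => 1
  | false, x => if h : ∃ k, x ∈ D.W k then h.choose.elim 1 c else 1

theorem gauge_false_of_mem {k : Option ι} {x : X} (hx : x ∈ D.W k) :
    D.gauge c false x = k.elim 1 c := by
  have h : ∃ l, x ∈ D.W l := ⟨k, hx⟩
  rw [gauge, dif_pos h, D.disjoint_W.eq (Set.not_disjoint_iff.2 ⟨x, h.choose_spec, hx⟩)]

theorem gauge_eq_of_mem (i : Bool) {k : Option ι} {x y : X} (hx : x ∈ D.W k) (hy : y ∈ D.W k) :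
    D.gauge c i x = D.gauge c i y := by
  cases i
  · rw [D.gauge_false_of_mem c hx, D.gauge_false_of_mem c hy]
  · rfl

theorem gauge_true (x : X) : D.gauge c true x = 1 := rfl

theorem gauge_base (i : Bool) : D.gauge c i D.base = 1 := by
  cases i
  · exact D.gauge_false_of_mem c (D.point_mem_W none)
  · exact D.gauge_true c D.base

variable [TopologicalSpace S] [DiscreteTopology S]

theorem continuousOn_gauge_mul_inv (i j : Bool) :
    ContinuousOn (fun p : X × S ↦ (D.gauge c j p.1 * (D.gauge c i p.1)⁻¹) p.2)
      ((D.U i ∩ D.U j) ×ˢ Set.univ) := by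
  rcases eq_or_ne i j with rfl | hij
  · simpa using continuous_snd.continuousOn
  · rintro ⟨x, s⟩ ⟨⟨hi, hj⟩, -⟩
    obtain ⟨k, hk⟩ : ∃ k, x ∈ D.W k := D.exists_mem_W (by cases i <;> cases j <;> simp_all)
    have locally_const : (fun p : X × S ↦ (D.gauge c j x * (D.gauge c i x)⁻¹) p.2) =ᶠ[𝓝 (x, s)]
        fun p ↦ (D.gauge c j p.1 * (D.gauge c i p.1)⁻¹) p.2 := by
      filter_upwards [((D.isOpen_W k).preimage continuous_fst).mem_nhds hk] with p hp
      rw [D.gauge_eq_of_mem c i hk hp, D.gauge_eq_of_mem c j hk hp]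
    exact ((continuous_of_discreteTopology.comp continuous_snd).continuousAt.congr
      locally_const).continuousWithinAt

/-- The covering of `X` with fiber `S` that is trivial over `U true` and `U false`, glued by the
permutation `c k` over `W (some k)` and by the identity over `W none`. -/
noncomputable def gluing : FiberBundleCore Bool X S where
  baseSet := D.U
  isOpen_baseSet := D.isOpen_U
  indexAt x := (D.exists_mem_U x).choose
  mem_baseSet_at x := (D.exists_mem_U x).choose_spec
  coordChange i j x := D.gauge c j x * (D.gauge c i x)⁻¹
  coordChange_self i x _ s := by simp
  coordChange_comp i j l x _ s := by simp
  continuousOn_coordChange := D.continuousOn_gauge_mul_inv c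

theorem gluing_coordChange (i j : Bool) (x : X) (s : S) :
    (D.gluing c).coordChange i j x s = D.gauge c j x ((D.gauge c i x)⁻¹ s) := rfl

theorem isCoveringMap_gluing_proj : IsCoveringMap (D.gluing c).proj :=
  isCoveringMap_fiberBundleCore_proj (D.gluing c)

theorem sheetPoint_base (i j : Bool) (s : S) :
    sheetPoint (D.gluing c) i D.base s = sheetPoint (D.gluing c) j D.base s := by
  rw [← sheetPoint_coordChange _ (D.base_mem_U i) (D.base_mem_U j), gluing_coordChange,
    gauge_base, gauge_base, inv_one, Equiv.Perm.one_apply, Equiv.Perm.one_apply]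

theorem monodromy_generator (k : Option ι) (s : S) :
    (D.isCoveringMap_gluing_proj c).monodromy (D.generator k)
      (sheetPoint (D.gluing c) true D.base s) =
    sheetPoint (D.gluing c) true D.base (k.elim 1 c s) := by
  have ht := D.point_mem_U k true
  have hf := D.point_mem_U k false
  have change_chart : sheetPoint (D.gluing c) true (D.point k) s =
      sheetPoint (D.gluing c) false (D.point k) (k.elim 1 c s) := by
    rw [← sheetPoint_coordChange _ ht hf, gluing_coordChange,
      D.gauge_false_of_mem c (D.point_mem_W k), gauge_true, inv_one, Equiv.Perm.one_apply]
  have hcov := D.isCoveringMap_gluing_proj c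
  calc hcov.monodromy (D.generator k) (sheetPoint (D.gluing c) true D.base s)
      = hcov.monodromy (.mk (D.arc false hf).symm)
          (hcov.monodromy (.mk (D.arc true ht)) (sheetPoint (D.gluing c) true D.base s)) := by
        rw [generator, loop, Path.Homotopic.Quotient.trans_refl]
        exact hcov.monodromy_trans_apply _ _ _
    _ = hcov.monodromy (.mk (D.arc false hf).symm)
          (sheetPoint (D.gluing c) false (D.point k) (k.elim 1 c s)) := by
        rw [monodromy_sheetPoint (D.gluing c) (D.arc_mem true ht), change_chart]
    _ = sheetPoint (D.gluing c) false D.base (k.elim 1 c s) :=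
        monodromy_sheetPoint (D.gluing c) (fun t ↦ D.arc_mem false hf (σ t)) _
    _ = sheetPoint (D.gluing c) true D.base (k.elim 1 c s) := D.sheetPoint_base c false true _

theorem monodromyPerm_generatorHom (w : FreeGroup ι) (s : S) :
    (D.isCoveringMap_gluing_proj c).monodromyPerm D.base (D.generatorHom w)
      (sheetPoint (D.gluing c) true D.base s) =
    sheetPoint (D.gluing c) true D.base (FreeGroup.lift c w s) := by
  have letter (k : ι) (s : S) :
      (D.isCoveringMap_gluing_proj c).monodromyPerm D.base (D.generatorHom (.of k))
        (sheetPoint (D.gluing c) true D.base s) =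
      sheetPoint (D.gluing c) true D.base (c k s) := by
    rw [generatorHom, FreeGroup.lift_apply_of, IsCoveringMap.coe_monodromyPerm]
    exact D.monodromy_generator c (some k) s
  induction w using FreeGroup.induction_on generalizing s with
  | C1 => rw [map_one, map_one, map_one, Equiv.Perm.one_apply, Equiv.Perm.one_apply]
  | of k => rw [letter, FreeGroup.lift_apply_of]
  | inv_of k _ =>
    rw [map_inv, map_inv, Equiv.Perm.inv_eq_iff_eq, letter, map_inv, FreeGroup.lift_apply_of,
      Equiv.Perm.coe_inv, Equiv.apply_symm_apply]
  | mul w w' ih ih' =>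
    rw [map_mul, map_mul, Equiv.Perm.mul_apply, ih', ih, map_mul, Equiv.Perm.mul_apply]

end Gluing

theorem generatorHom_injective : Function.Injective D.generatorHom := by
  let _ : TopologicalSpace (FreeGroup ι) := ⊥
  have _ : DiscreteTopology (FreeGroup ι) := ⟨rfl⟩
  let c (k : ι) : Equiv.Perm (FreeGroup ι) := MulAction.toPermHom _ _ (FreeGroup.of k)
  have lift_eq : FreeGroup.lift c = MulAction.toPermHom (FreeGroup ι) (FreeGroup ι) :=
    FreeGroup.ext_hom _ _ fun _ ↦ FreeGroup.lift_apply_of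
  have lift_apply_one (w : FreeGroup ι) : FreeGroup.lift c w 1 = w := by
    rw [lift_eq, MulAction.toPermHom_apply, MulAction.toPerm_apply, smul_eq_mul, mul_one]
  intro w w' h
  have same_sheet := D.monodromyPerm_generatorHom c w 1
  rw [h, D.monodromyPerm_generatorHom c w' 1, lift_apply_one, lift_apply_one] at same_sheet
  exact (sheetPoint_injective _ (D.base_mem_U true) same_sheet).symm

/-- The fundamental group of a space with a binary cover is free on the pieces of the intersection
other than `W none`. -/
noncomputable def fundamentalGroupMulEquiv (x : X) : FundamentalGroup X x ≃* FreeGroup ι :=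
  have := D.pathConnectedSpace
  (FundamentalGroup.fundamentalGroupMulEquivOfPathConnected x D.base).trans
    (MulEquiv.ofBijective D.generatorHom
      ⟨D.generatorHom_injective, D.generatorHom_surjective⟩).symm

end BinaryCover

/-! ### The plane punctured at finitely many points -/

theorem isSimplyConnected_of_starConvex_fibers {E F : Type*} [TopologicalSpace E]
    [SimplyConnectedSpace E] [AddCommGroup F] [Module ℝ F] [TopologicalSpace F] [ContinuousAdd F]
    [ContinuousSMul ℝ F] {S : Set (E × F)} {g : E → F} (hg : Continuous g)
    (mem : ∀ x, (x, g x) ∈ S) (star : ∀ x, StarConvex ℝ (g x) {y | (x, y) ∈ S}) :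
    IsSimplyConnected S := by
  let contraction : C(I × S, S) :=
    { toFun q := ⟨(q.2.1.1, (1 - q.1 : ℝ) • g q.2.1.1 + (q.1 : ℝ) • q.2.1.2),
        star q.2.1.1 q.2.2 (sub_nonneg.2 q.1.2.2) q.1.2.1 (sub_add_cancel _ _)⟩ }
  let e : ContinuousMap.HomotopyEquiv S E :=
    { toFun := ⟨fun p ↦ p.1.1, by fun_prop⟩
      invFun := ⟨fun x ↦ ⟨(x, g x), mem x⟩, by fun_prop⟩
      left_inv := ⟨⟨contraction, fun p ↦ by simp [contraction], fun p ↦ by simp [contraction]⟩⟩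
      right_inv := .refl _ }
  exact e.simplyConnectedSpace

section Gap

variable {ι α : Type*} [LinearOrder α] (a : ι → α)

/-- The open intervals into which the points `a i` cut a linear order: the one to the left of all
the points for `none`, and the one starting at `a i` for `some i`. -/
def gap : Option ι → Set α
  | none => {x | ∀ i, x < a i}
  | some i => {x | a i < x ∧ ∀ j, a i < a j → x < a j}

theorem ordConnected_gap (k : Option ι) : (gap a k).OrdConnected := by
  refine ⟨fun x hx y hy z hz ↦ ?_⟩
  cases k with
  | none => exact fun j ↦ hz.2.trans_lt (hy j)
  | some i => exact ⟨hx.1.trans_le hz.1, fun j hj ↦ hz.2.trans_lt (hy.2 j hj)⟩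

theorem pairwise_disjoint_gap {a : ι → α} (ha : Function.Injective a) :
    Pairwise fun k l ↦ Disjoint (gap a k) (gap a l) := by
  refine fun k l hkl ↦ Set.disjoint_left.2 fun x hk hl ↦ ?_
  match k, l with
  | none, none => exact hkl rfl
  | none, some l => exact lt_asymm (hk l) hl.1
  | some k, none => exact lt_asymm (hl k) hk.1
  | some k, some l =>
    rcases (ha.ne fun h ↦ hkl (congrArg some h)).lt_or_gt with h | h
    · exact lt_asymm (hk.2 l h) hl.1
    · exact lt_asymm (hl.2 k h) hk.1

variable [Finite ι]

theorem iUnion_gap : ⋃ k, gap a k = (Set.range a)ᶜ := by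
  refine subset_antisymm (Set.iUnion_subset fun k ↦ ?_) fun x hx ↦ Set.mem_iUnion.2 ?_
  · rintro _ hx ⟨j, rfl⟩
    cases k with
    | none => exact lt_irrefl _ (hx j)
    | some i => exact lt_irrefl _ (hx.2 j hx.1)
  · have hne (j : ι) : a j ≠ x := fun h ↦ hx ⟨j, h⟩
    by_cases h : ∃ i, a i < x
    · obtain ⟨i, hi, rightmost⟩ := Set.exists_max_image {i | a i < x} a (Set.toFinite _) h
      exact ⟨some i, hi, fun j hj ↦ (hne j).lt_or_gt.resolve_left fun hjx ↦
        (rightmost j hjx).not_gt hj⟩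
    · exact ⟨none, fun j ↦ (hne j).lt_or_gt.resolve_left fun hj ↦ h ⟨j, hj⟩⟩

theorem gap_subset_compl_range (k : Option ι) : gap a k ⊆ (Set.range a)ᶜ :=
  iUnion_gap a ▸ Set.subset_iUnion (gap a) k

theorem gap_nonempty [DenselyOrdered α] [NoMinOrder α] [NoMaxOrder α] [Nonempty α]
    (k : Option ι) : (gap a k).Nonempty := by
  cases k with
  | none =>
    obtain ⟨x, -, hx⟩ := Set.Finite.exists_between' Set.finite_empty (Set.finite_range a) (by simp)
    exact ⟨x, fun j ↦ hx _ ⟨j, rfl⟩⟩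
  | some i =>
    obtain ⟨x, hx, hx'⟩ := Set.Finite.exists_between' (Set.finite_singleton (a i))
      (Set.toFinite (a '' {j | a i < a j})) (by simp)
    exact ⟨x, hx _ rfl, fun j hj ↦ hx' _ ⟨j, hj, rfl⟩⟩

theorem isOpen_gap [TopologicalSpace α] [OrderClosedTopology α] (k : Option ι) :
    IsOpen (gap a k) := by
  cases k with
  | none =>
    simp only [gap, Set.ofPred_forall]
    exact isOpen_iInter_of_finite fun i ↦ isOpen_Iio
  | some i =>
    simp only [gap, Set.ofPred_forall, Set.ofPred_and]
    exact isOpen_Ioi.inter <| isOpen_iInter_of_finite fun j ↦ isOpen_iInter_of_finite fun _ ↦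
      isOpen_Iio

end Gap

section SlitPlane

variable {ι : Type*} (a b : ι → ℝ)

/-- The plane without the closed vertical rays issuing from the points `(a i, b i)`, upwards for
`true` and downwards for `false`. -/
def verticalSlitPlane : Bool → Set (ℝ × ℝ)
  | true => {p | ∀ i, p.1 = a i → p.2 < b i}
  | false => {p | ∀ i, p.1 = a i → b i < p.2}

theorem iUnion_verticalSlitPlane {a : ι → ℝ} (ha : Function.Injective a) :
    ⋃ j, verticalSlitPlane a b j = (Set.range fun i ↦ (a i, b i))ᶜ := by
  refine subset_antisymm (Set.iUnion_subset fun j ↦ ?_) fun p hp ↦ ?_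
  · rintro _ hp ⟨i, rfl⟩
    cases j <;> exact lt_irrefl _ (hp i rfl)
  · by_cases h : ∃ i, p.1 = a i
    · obtain ⟨i, hi⟩ := h
      have only_i {j : ι} (hj : p.1 = a j) : j = i := ha (hj.symm.trans hi)
      rcases lt_or_gt_of_ne fun h : p.2 = b i ↦ hp ⟨i, Prod.ext hi.symm h.symm⟩ with h | h
      · exact Set.mem_iUnion.2 ⟨true, fun j hj ↦ only_i hj ▸ h⟩
      · exact Set.mem_iUnion.2 ⟨false, fun j hj ↦ only_i hj ▸ h⟩
    · exact Set.mem_iUnion.2 ⟨true, fun i hi ↦ (h ⟨i, hi⟩).elim⟩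

theorem verticalSlitPlane_inter :
    verticalSlitPlane a b true ∩ verticalSlitPlane a b false = (Set.range a)ᶜ ×ˢ Set.univ := by
  ext p
  constructor
  · rintro ⟨below, above⟩
    exact ⟨fun ⟨i, hi⟩ ↦ lt_asymm (below i hi.symm) (above i hi.symm), trivial⟩
  · rintro ⟨hp, -⟩
    exact ⟨fun i hi ↦ (hp ⟨i, hi.symm⟩).elim, fun i hi ↦ (hp ⟨i, hi.symm⟩).elim⟩

variable [Finite ι]

theorem isOpen_verticalSlitPlane (j : Bool) : IsOpen (verticalSlitPlane a b j) := by
  cases j <;>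
  simp only [verticalSlitPlane, Set.ofPred_forall, imp_iff_not_or, Set.ofPred_or] <;>
  exact isOpen_iInter_of_finite fun i ↦ (isOpen_ne_fun (by fun_prop) (by fun_prop)).union
    (isOpen_lt (by fun_prop) (by fun_prop))

theorem isSimplyConnected_verticalSlitPlane (j : Bool) :
    IsSimplyConnected (verticalSlitPlane a b j) := by
  obtain ⟨m, hm⟩ : ∃ m, ∀ x, (x, m) ∈ verticalSlitPlane a b j := by
    cases j
    · obtain ⟨m, hm⟩ := (Filter.eventually_all.2 fun i ↦ Filter.eventually_gt_atTop (b i)).exists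
      exact ⟨m, fun x i _ ↦ hm i⟩
    · obtain ⟨m, hm⟩ := (Filter.eventually_all.2 fun i ↦ Filter.eventually_lt_atBot (b i)).exists
      exact ⟨m, fun x i _ ↦ hm i⟩
  have ordConnected_fiber (x : ℝ) : {y | (x, y) ∈ verticalSlitPlane a b j}.OrdConnected := by
    refine ⟨fun y hy z hz w hw ↦ ?_⟩
    cases j
    · exact fun i hi ↦ (hy i hi).trans_le hw.1
    · exact fun i hi ↦ hw.2.trans_lt (hz i hi)
  exact isSimplyConnected_of_starConvex_fibers continuous_const hm fun x ↦
    (ordConnected_fiber x).convex.starConvex (hm x)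

/-- The cover of the punctured plane by the two slit planes, for punctures with distinct
abscissas; the slit planes meet in the vertical strips between the punctures. -/
def puncturedPlaneBinaryCover {a : ι → ℝ} (ha : Function.Injective a) :
    BinaryCover ↥(Set.range fun i ↦ (a i, b i))ᶜ ι where
  U j := (↑) ⁻¹' verticalSlitPlane a b j
  W k := (↑) ⁻¹' (gap a k ×ˢ (Set.univ : Set ℝ))
  isOpen_U j := (isOpen_verticalSlitPlane a b j).preimage continuous_subtype_val
  isSimplyConnected_U j := isSimplyConnected_preimage_coe
    (isSimplyConnected_verticalSlitPlane a b j)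
    (iUnion_verticalSlitPlane b ha ▸ Set.subset_iUnion _ j)
  iUnion_U := by
    rw [← Set.preimage_iUnion, iUnion_verticalSlitPlane b ha, Subtype.coe_preimage_self]
  isOpen_W k := ((isOpen_gap a k).prod isOpen_univ).preimage continuous_subtype_val
  isPathConnected_W k := by
    refine IsPathConnected.preimage_coe ?_ ?_
    · exact ((ordConnected_gap a k).convex.prod convex_univ).isPathConnected
        ((gap_nonempty a k).prod Set.univ_nonempty)
    · exact fun p hp ⟨i, hi⟩ ↦ gap_subset_compl_range a k hp.1 ⟨i, congrArg Prod.fst hi⟩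
  iUnion_W := by
    rw [← Set.preimage_iUnion, ← Set.preimage_inter, verticalSlitPlane_inter, ← iUnion_gap a,
      Set.iUnion_prod_const]
  disjoint_W k l hkl := (Set.Disjoint.set_prod_left (pairwise_disjoint_gap ha hkl) _ _).preimage _

end SlitPlane

/-- Multiplication by `1 + t * I` identifies the abscissas of two given distinct points for at most
one `t`, so all but finitely many `t` will do. -/
theorem exists_injective_re_mul {ι : Type*} [Finite ι] {z : ι → ℂ} (hz : Function.Injective z) :
    ∃ c : ℂ, c ≠ 0 ∧ Function.Injective fun i ↦ (c * z i).re := by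
  obtain ⟨t, ht⟩ := Set.Finite.exists_notMem <| Set.finite_range fun q : ι × ι ↦
    ((z q.1).re - (z q.2).re) / ((z q.1).im - (z q.2).im)
  refine ⟨⟨1, t⟩, fun h ↦ one_ne_zero (congrArg Complex.re h), fun i j hij ↦ hz ?_⟩
  simp only [Complex.mul_re, one_mul] at hij
  by_cases him : (z i).im = (z j).im
  · exact Complex.ext (by rw [him] at hij; linarith) him
  · refine (ht ⟨(i, j), ?_⟩).elim
    rw [div_eq_iff (sub_ne_zero.2 him)]
    linarith

/-- For a finite subset `Y` of `ℂ` and a basepoint `x₀ ∈ ℂ` with `x₀ ∉ Y`, the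
fundamental group `π₁(ℂ \ Y, x₀)` of the complement of `Y` in `ℂ` is isomorphic to the
free group `F(Y)` on the set `Y`; in particular it is a free group of rank `|Y|`. -/
theorem fundamentalGroup_complement_finset_iso_freeGroup
    (Y : Finset ℂ) (x₀ : ℂ) (hx₀ : x₀ ∉ Y) :
    Nonempty (FundamentalGroup {z : ℂ // z ∉ Y} ⟨x₀, hx₀⟩ ≃* FreeGroup Y) := by
  obtain ⟨c, hc, hinj⟩ := exists_injective_re_mul (Subtype.val_injective (p := (· ∈ Y)))
  let similarity : ℂ ≃ₜ ℝ × ℝ :=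
    (Homeomorph.mulLeft₀ c hc).trans Complex.equivRealProdCLM.toHomeomorph
  have mem_iff (z : ℂ) : z ∉ Y ↔ similarity z ∈ (Set.range fun y : Y ↦ similarity y)ᶜ := by simp
  exact ⟨(fundamentalGroupMulEquivOfHomotopyEquiv
    (similarity.subtype mem_iff).toHomotopyEquiv _).trans
    ((puncturedPlaneBinaryCover _ hinj).fundamentalGroupMulEquiv _)⟩
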